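/- arXiv:2502.13961 — 2 statements merged into one kernel-verified Lean document; each statement's English description precedes it below -/
import Mathlib

section
/- (Gaussian hypercontractivity) For any polynomial q: ℝ^d → ℝ of degree k and any integer p ≥ 2, the L^p norm of q with respect to the standard Gaussian measure is bounded by (p-1)^k times its L^2 norm: ‖q‖_{L^p(γ_d)} ≤ (p-1)^k ‖q‖_{L^2(γ_d)}. -/
open MeasureTheory ProbabilityTheory

namespace GHC

lemma choose_le (m j : ℕ) (hm : 1 ≤ m) :
    ((2 * m).choose (2 * j) : ℝ) ≤ (2 * (m : ℝ) - 1) ^ j * (m.choose j : ℝ) := by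
  induction j with
  | zero => simp
  | succ j ih =>
    by_cases hj : j < m
    · obtain ⟨t, rfl⟩ : ∃ t, m = j + 1 + t := ⟨m - (j + 1), by omega⟩
      have h1 := Nat.choose_succ_right_eq (2 * (j + 1 + t)) (2 * j)
      have h2 := Nat.choose_succ_right_eq (2 * (j + 1 + t)) (2 * j + 1)
      have h3 := Nat.choose_succ_right_eq (j + 1 + t) j
      rw [show 2 * (j + 1 + t) - 2 * j = 2 * t + 2 by omega] at h1
      rw [show 2 * (j + 1 + t) - (2 * j + 1) = 2 * t + 1 by omega] at h2
      rw [show (j + 1 + t) - j = t + 1 by omega] at h3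
      rw [show 2 * (j + 1) = 2 * j + 1 + 1 by ring]
      generalize (2 * (j + 1 + t)).choose (2 * j + 1 + 1) = X at *
      generalize (2 * (j + 1 + t)).choose (2 * j + 1) = Y at *
      generalize (2 * (j + 1 + t)).choose (2 * j) = Z at *
      generalize (j + 1 + t).choose (j + 1) = V at *
      generalize (j + 1 + t).choose j = W at *
      have h1' : (Y : ℝ) * (2 * j + 1) = Z * (2 * t + 2) := by exact_mod_cast h1
      have h2' : (X : ℝ) * (2 * j + 1 + 1) = Y * (2 * t + 1) := by exact_mod_cast h2
      have h3' : (V : ℝ) * (j + 1) = W * (t + 1) := by exact_mod_cast h3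
      push_cast at ih ⊢
      have hX : (X : ℝ) * ((j + 1) * (2 * j + 1)) = Z * ((t + 1) * (2 * t + 1)) := by
        linear_combination (2 * (j:ℝ) + 1) / 2 * h2' + (2 * (t:ℝ) + 1) / 2 * h1'
      have hj0 : (0 : ℝ) ≤ j := Nat.cast_nonneg j
      have ht0 : (0 : ℝ) ≤ t := Nat.cast_nonneg t
      set c : ℝ := 2 * ((j : ℝ) + 1 + t) - 1 with hc
      have hc0 : 0 ≤ c := by rw [hc]; linarith
      have hpos : (0 : ℝ) < (j + 1) * (2 * j + 1) := by positivity
      refine le_of_mul_le_mul_right ?_ hpos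
      rw [hX]
      have e : c ^ (j + 1) * (V : ℝ) * ((j + 1) * (2 * j + 1))
        = (c ^ j * W) * ((t + 1) * (c * (2 * j + 1))) := by
        rw [pow_succ]; linear_combination (c ^ j * c * (2 * j + 1)) * h3'
      rw [e]
      have h4 : 2 * (t : ℝ) + 1 ≤ c * (2 * j + 1) := by rw [hc]; nlinarith
      have h5 : 0 ≤ c ^ j * (W : ℝ) := by positivity
      gcongr
    · rw [Nat.choose_eq_zero_of_lt (by omega)]
      have : (1 : ℝ) ≤ m := by exact_mod_cast hm
      have : (0 : ℝ) ≤ 2 * (m : ℝ) - 1 := by linarith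
      simp; positivity

lemma sum_even_odd (g : ℕ → ℝ) (m : ℕ) :
    ∑ i ∈ Finset.range (2 * m + 1), g i
      = ∑ j ∈ Finset.range (m + 1), g (2 * j) + ∑ j ∈ Finset.range m, g (2 * j + 1) := by
  induction m with
  | zero => simp
  | succ m ih =>
    rw [show 2 * (m + 1) + 1 = 2 * m + 1 + 1 + 1 by ring, Finset.sum_range_succ,
      Finset.sum_range_succ, ih, Finset.sum_range_succ _ (m + 1), Finset.sum_range_succ _ m,
      Finset.sum_range_succ _ m]
    rw [show 2 * (m + 1) = 2 * m + 1 + 1 by ring]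
    ring

lemma two_point (m : ℕ) (hm : 1 ≤ m) (a b : ℝ) :
    ((a + b) ^ (2 * m) + (a - b) ^ (2 * m)) / 2 ≤ (a ^ 2 + (2 * (m : ℝ) - 1) * b ^ 2) ^ m := by
  have h1 : (a + b) ^ (2 * m) = ∑ i ∈ Finset.range (2 * m + 1),
      b ^ i * a ^ (2 * m - i) * ((2 * m).choose i : ℝ) := by rw [add_comm, add_pow]
  have h2 : (a - b) ^ (2 * m) = ∑ i ∈ Finset.range (2 * m + 1),
      (-b) ^ i * a ^ (2 * m - i) * ((2 * m).choose i : ℝ) := by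
    rw [sub_eq_add_neg, add_comm, add_pow]
  have h3 : ((a + b) ^ (2 * m) + (a - b) ^ (2 * m)) / 2 = ∑ j ∈ Finset.range (m + 1),
      (b ^ 2) ^ j * (a ^ 2) ^ (m - j) * ((2 * m).choose (2 * j) : ℝ) := by
    rw [h1, h2, sum_even_odd, sum_even_odd]
    have e1 : ∀ j, (-b) ^ (2 * j) = b ^ (2 * j) := fun j => by rw [pow_mul, pow_mul, neg_sq]
    have e2 : ∀ j, (-b) ^ (2 * j + 1) = - b ^ (2 * j + 1) := fun j => by
      rw [pow_succ, e1, pow_succ]; ring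
    simp only [e1, e2, neg_mul, Finset.sum_neg_distrib]
    have e3 : ∀ j, (b ^ 2) ^ j * (a ^ 2) ^ (m - j) * ((2 * m).choose (2 * j) : ℝ)
        = b ^ (2 * j) * a ^ (2 * m - 2 * j) * ((2 * m).choose (2 * j) : ℝ) := fun j => by
      rw [← pow_mul, ← pow_mul, Nat.mul_sub]
    simp only [e3]
    ring
  rw [h3, add_comm (a ^ 2), add_pow]
  refine Finset.sum_le_sum fun j _ => ?_
  rw [mul_pow]
  have := choose_le m j hm
  have h5 : 0 ≤ (b ^ 2) ^ j * (a ^ 2) ^ (m - j) := by positivity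
  calc _ ≤ (b ^ 2) ^ j * (a ^ 2) ^ (m - j) * ((2 * (m : ℝ) - 1) ^ j * (m.choose j : ℝ)) := by gcongr
    _ = _ := by ring

/-- degree at most `k` through finite differences -/
def Dg {E : Type*} [AddCommGroup E] : ℕ → (E → ℝ) → Prop
  | 0, f => ∀ x y, f x = f y
  | k + 1, f => ∀ v, Dg k (fun x => f (x + v) - f (x - v))

section Dg
variable {E : Type*} [AddCommGroup E]

lemma Dg.add {k : ℕ} : ∀ {f g : E → ℝ}, Dg k f → Dg k g → Dg k (fun x => f x + g x) := by
  induction k with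
  | zero => intro f g hf hg x y; simp only [hf x y, hg x y]
  | succ k ih =>
    intro f g hf hg v
    have := ih (hf v) (hg v)
    convert! this using 2
    ring

lemma Dg.smul {k : ℕ} (c : ℝ) : ∀ {f : E → ℝ}, Dg k f → Dg k (fun x => c * f x) := by
  induction k with
  | zero => intro f hf x y; simp only [hf x y]
  | succ k ih =>
    intro f hf v
    have := ih (hf v)
    convert! this using 2
    ring

lemma Dg.translate {k : ℕ} (w : E) : ∀ {f : E → ℝ}, Dg k f → Dg k (fun x => f (x + w)) := by
  induction k with
  | zero => intro f hf x y; exact hf _ _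
  | succ k ih =>
    intro f hf v
    have := ih (hf v)
    convert! this using 2 with x
    change f (x + v + w) - f (x - v + w) = _
    rw [add_right_comm, sub_add_eq_add_sub]

lemma Dg.succ {k : ℕ} : ∀ {f : E → ℝ}, Dg k f → Dg (k + 1) f := by
  induction k with
  | zero => intro f hf v x y; simp only [hf (x + v) (x - v), hf (y + v) (y - v), sub_self]
  | succ k ih => intro f hf v; exact ih (hf v)

lemma Dg.mono {k l : ℕ} (h : k ≤ l) {f : E → ℝ} (hf : Dg k f) : Dg l f := by
  induction h with
  | refl => exact hf
  | step _ ih => exact ih.succ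

lemma Dg.const (c : ℝ) : Dg 0 (fun _ : E => c) := fun _ _ => rfl

lemma Dg.mul_aux (n : ℕ) : ∀ (j k : ℕ), j + k = n → ∀ {f g : E → ℝ}, Dg j f → Dg k g →
    Dg (j + k) (fun x => f x * g x) := by
  induction n with
  | zero =>
    intro j k h f g hf hg
    obtain ⟨rfl, rfl⟩ : j = 0 ∧ k = 0 := by omega
    intro x y
    simp only [hf x y, hg x y]
  | succ n ih =>
    intro j k h f g hf hg
    rcases j with _ | j
    · have : (fun x => f x * g x) = fun x => f 0 * g x := by
        funext x; rw [hf x 0]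
      rw [this, zero_add]
      exact hg.smul _
    rcases k with _ | k
    · have : (fun x => f x * g x) = fun x => g 0 * f x := by
        funext x; rw [hg x 0, mul_comm]
      rw [this, add_zero]
      exact hf.smul _
    intro v
    have h1 := ih j (k + 1) (by omega) (hf v) (hg.translate v)
    have h2 := ih (j + 1) k (by omega) (hf.translate (-v)) (hg v)
    have e1 : j + 1 + k = j + (k + 1) := by ring
    rw [e1] at h2
    have h3 := h1.add h2
    have e2 : j + 1 + k.add 0 = j + (k + 1) := by simp; ring
    change Dg (j + 1 + k) _
    rw [e1]
    convert! h3 using 2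
    simp only [sub_eq_add_neg]
    ring

lemma Dg.mul {j k : ℕ} {f g : E → ℝ} (hf : Dg j f) (hg : Dg k g) :
    Dg (j + k) (fun x => f x * g x) := Dg.mul_aux _ j k rfl hf hg

lemma Dg.pow {j : ℕ} {f : E → ℝ} (hf : Dg j f) (n : ℕ) :
    Dg (n * j) (fun x => f x ^ n) := by
  induction n with
  | zero => simpa using Dg.const 1
  | succ n ih =>
    have := ih.mul hf
    simpa [pow_succ, add_mul] using this

lemma Dg.prod {ι : Type*} (s : Finset ι) (k : ι → ℕ) (f : ι → E → ℝ) (h : ∀ i, Dg (k i) (f i)) :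
    Dg (∑ i ∈ s, k i) (fun x => ∏ i ∈ s, f i x) := by
  classical
  induction s using Finset.induction_on with
  | empty => simpa using Dg.const 1
  | insert a s ha ih =>
    simp only [Finset.sum_insert ha, Finset.prod_insert ha]
    exact (h a).mul ih

lemma Dg.sum {ι : Type*} (s : Finset ι) (k : ℕ) (f : ι → E → ℝ) (h : ∀ i ∈ s, Dg k (f i)) :
    Dg k (fun x => ∑ i ∈ s, f i x) := by
  classical
  induction s using Finset.induction_on with
  | empty => simpa using (Dg.const 0).mono (Nat.zero_le k)
  | insert a s ha ih =>
    simp only [Finset.sum_insert ha]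
    exact (h a (by simp)).add (ih fun i hi => h i (by simp [hi]))

end Dg

lemma Dg.mvPolynomial {d k : ℕ} (q : MvPolynomial (Fin d) ℝ) (hq : q.totalDegree ≤ k) :
    Dg k (fun x : Fin d → ℝ => MvPolynomial.eval x q) := by
  have : (fun x : Fin d → ℝ => MvPolynomial.eval x q) =
      fun x => ∑ s ∈ q.support, q.coeff s * ∏ i, x i ^ s i := by
    funext x; rw [MvPolynomial.eval_eq']
  rw [this]
  refine Dg.sum _ _ _ fun s hs => Dg.smul _ ?_
  have h1 : ∀ i : Fin d, Dg 1 (fun x : Fin d → ℝ => x i) := by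
    intro i v x y
    simp
  have h2 := Dg.prod Finset.univ (fun i => s i * 1) (fun i (x : Fin d → ℝ) => x i ^ s i)
    (fun i => (h1 i).pow (s i))
  refine h2.mono ?_
  have h3 := MvPolynomial.le_totalDegree hs
  rw [Finsupp.sum_fintype _ _ (by simp)] at h3
  simp only [mul_one]
  omega

/-- average over signs of a random walk -/
noncomputable def Ex {d : ℕ} (c : ℝ) : List (Fin d) → ((Fin d → ℝ) → ℝ) → ℝ
  | [], h => h 0
  | i :: L, h => Ex c L (fun x => (h (x + Pi.single i c) + h (x - Pi.single i c)) / 2)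

section Ex
variable {d : ℕ} {c : ℝ}

lemma Ex_add (L : List (Fin d)) : ∀ (f g : (Fin d → ℝ) → ℝ),
    Ex c L (fun x => f x + g x) = Ex c L f + Ex c L g := by
  induction L with
  | nil => intro f g; rfl
  | cons i L ih =>
    intro f g
    simp only [Ex]
    rw [← ih]
    congr 1; funext x; ring

lemma Ex_smul (L : List (Fin d)) (t : ℝ) : ∀ (f : (Fin d → ℝ) → ℝ),
    Ex c L (fun x => t * f x) = t * Ex c L f := by
  induction L with
  | nil => intro f; rfl
  | cons i L ih =>
    intro f
    simp only [Ex]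
    rw [← ih]
    congr 1; funext x; ring

lemma Ex_const (L : List (Fin d)) (t : ℝ) : Ex c L (fun _ => t) = t := by
  induction L with
  | nil => rfl
  | cons i L ih =>
    simp only [Ex]
    convert ih using 2; funext x; ring

lemma Ex_mono (L : List (Fin d)) : ∀ {f g : (Fin d → ℝ) → ℝ}, (∀ x, f x ≤ g x) →
    Ex c L f ≤ Ex c L g := by
  induction L with
  | nil => intro f g h; exact h 0
  | cons i L ih =>
    intro f g h
    simp only [Ex]
    refine ih fun x => ?_
    have := h (x + Pi.single i c)
    have := h (x - Pi.single i c)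
    linarith

lemma Ex_minkowski_pos (L : List (Fin d)) (m : ℕ) (a b : (Fin d → ℝ) → ℝ)
    (ha : ∀ x, 0 ≤ a x) (hb : ∀ x, 0 ≤ b x)
    {U V : ℝ} (hU : 0 < U) (hV : 0 < V)
    (h1 : Ex c L (fun x => a x ^ m) ≤ U ^ m) (h2 : Ex c L (fun x => b x ^ m) ≤ V ^ m) :
    Ex c L (fun x => (a x + b x) ^ m) ≤ (U + V) ^ m := by
  have key : ∀ x, (a x + b x) ^ m ≤ ((U + V) ^ m * (U / (U + V)) * (U ^ m)⁻¹) * a x ^ m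
      + ((U + V) ^ m * (V / (U + V)) * (V ^ m)⁻¹) * b x ^ m := by
    intro x
    have hcv := (convexOn_pow (𝕜 := ℝ) m).2
      (Set.mem_Ici.2 (div_nonneg (ha x) hU.le)) (Set.mem_Ici.2 (div_nonneg (hb x) hV.le))
      (show 0 ≤ U / (U + V) by positivity) (show 0 ≤ V / (U + V) by positivity) (by field_simp)
    simp only [smul_eq_mul] at hcv
    have e : a x + b x = (U + V) * (U / (U + V) * (a x / U) + V / (U + V) * (b x / V)) := by
      field_simp
    rw [e, mul_pow]
    calc _ ≤ (U + V) ^ m * (U / (U + V) * (a x / U) ^ m + V / (U + V) * (b x / V) ^ m) := by gcongr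
      _ = _ := by rw [div_pow, div_pow]; ring
  refine (Ex_mono L key).trans ?_
  rw [Ex_add, Ex_smul, Ex_smul]
  calc _ ≤ ((U + V) ^ m * (U / (U + V)) * (U ^ m)⁻¹) * U ^ m
      + ((U + V) ^ m * (V / (U + V)) * (V ^ m)⁻¹) * V ^ m := by gcongr
    _ = _ := by field_simp

lemma Ex_minkowski (L : List (Fin d)) (m : ℕ) (a b : (Fin d → ℝ) → ℝ)
    (ha : ∀ x, 0 ≤ a x) (hb : ∀ x, 0 ≤ b x)
    {U V : ℝ} (hU : 0 ≤ U) (hV : 0 ≤ V)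
    (h1 : Ex c L (fun x => a x ^ m) ≤ U ^ m) (h2 : Ex c L (fun x => b x ^ m) ≤ V ^ m) :
    Ex c L (fun x => (a x + b x) ^ m) ≤ (U + V) ^ m := by
  have ht : Filter.Tendsto (fun ε : ℝ => ((U + ε) + (V + ε)) ^ m) (nhdsWithin 0 (Set.Ioi 0))
      (nhds ((U + V) ^ m)) := by
    have : Continuous (fun ε : ℝ => ((U + ε) + (V + ε)) ^ m) := by fun_prop
    have h := this.tendsto 0
    simp only [add_zero] at h
    exact h.mono_left nhdsWithin_le_nhds
  refine ge_of_tendsto ht ?_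
  filter_upwards [self_mem_nhdsWithin] with ε hε
  have hε : 0 < ε := hε
  refine Ex_minkowski_pos L m a b ha hb (by linarith) (by linarith)
    (h1.trans ?_) (h2.trans ?_)
  · gcongr; linarith
  · gcongr; linarith

theorem Ex_hyper (m : ℕ) (hm : 1 ≤ m) (L : List (Fin d)) : ∀ (k : ℕ) (f : (Fin d → ℝ) → ℝ), Dg k f →
    Ex c L (fun x => f x ^ (2 * m)) ≤ ((2 * (m : ℝ) - 1) ^ k * Ex c L (fun x => f x ^ 2)) ^ m := by
  have hm' : (1 : ℝ) ≤ m := by exact_mod_cast hm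
  have hC : (1 : ℝ) ≤ 2 * (m : ℝ) - 1 := by linarith
  induction L with
  | nil =>
    intro k f _
    simp only [Ex]
    rw [pow_mul]
    have : (1 : ℝ) ≤ (2 * (m : ℝ) - 1) ^ k := one_le_pow₀ hC
    gcongr
    nlinarith [sq_nonneg (f 0)]
  | cons i L ih =>
    intro k f hf
    rcases k with _ | k
    · have : f = fun _ => f 0 := by funext x; exact hf x 0
      rw [this, Ex_const, Ex_const, pow_zero, one_mul, pow_mul]
    set C : ℝ := 2 * (m : ℝ) - 1 with hCdef
    set v : Fin d → ℝ := Pi.single i c with hv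
    set a : (Fin d → ℝ) → ℝ := fun x => (1 / 2) * (f (x + v) + f (x + -v)) with ha
    set b : (Fin d → ℝ) → ℝ := fun x => (1 / 2) * (f (x + v) - f (x - v)) with hb
    have hda : Dg (k + 1) a := ((hf.translate v).add (hf.translate (-v))).smul _
    have hdb : Dg k b := (hf v).smul _
    have hp : ∀ x, f (x + v) = a x + b x := by
      intro x; simp only [ha, hb, ← sub_eq_add_neg]; ring
    have hn : ∀ x, f (x - v) = a x - b x := by
      intro x; simp only [ha, hb, ← sub_eq_add_neg]; ring
    have hA := ih (k + 1) a hda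
    have hB := ih k b hdb
    have hA0 : 0 ≤ Ex c L (fun x => a x ^ 2) := by
      rw [← Ex_const (c := c) L 0]; exact Ex_mono L fun x => sq_nonneg _
    have hB0 : 0 ≤ Ex c L (fun x => b x ^ 2) := by
      rw [← Ex_const (c := c) L 0]; exact Ex_mono L fun x => sq_nonneg _
    simp only [Ex, ← hv, hp, hn]
    have e2 : Ex c L (fun x => ((a x + b x) ^ 2 + (a x - b x) ^ 2) / 2)
        = Ex c L (fun x => a x ^ 2) + Ex c L (fun x => b x ^ 2) := by
      rw [← Ex_add]; congr 1; funext x; ring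
    rw [e2]
    refine (Ex_mono L fun x => two_point m hm (a x) (b x)).trans ?_
    have hM := Ex_minkowski (c := c) L m (fun x => a x ^ 2) (fun x => C * b x ^ 2)
      (fun x => sq_nonneg _) (fun x => by positivity)
      (U := C ^ (k + 1) * Ex c L (fun x => a x ^ 2))
      (V := C * (C ^ k * Ex c L (fun x => b x ^ 2))) (by positivity) (by positivity)
      (by simpa only [← pow_mul] using hA)
      (by
        simp only [mul_pow C, ← pow_mul]
        rw [Ex_smul]
        gcongr)
    refine hM.trans (le_of_eq ?_)
    congr 1
    ring

end Ex

end GHC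
namespace GHC
/-- one step average in one dimension -/
noncomputable def Av (c : ℝ) (h : ℝ → ℝ) : ℝ → ℝ := fun x => (h (x + c) + h (x - c)) / 2

/-- one step difference in one dimension -/
noncomputable def Df (c : ℝ) (h : ℝ → ℝ) : ℝ → ℝ := fun x => (h (x + c) - h (x - c)) / 2

lemma Av_add (c : ℝ) (f g : ℝ → ℝ) : Av c (fun x => f x + g x) = fun x => Av c f x + Av c g x := by
  funext x; simp only [Av]; ring

lemma Av_smul (c t : ℝ) (f : ℝ → ℝ) : Av c (fun x => t * f x) = fun x => t * Av c f x := by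
  funext x; simp only [Av]; ring

lemma Av_iter_add (c : ℝ) (n : ℕ) : ∀ (f g : ℝ → ℝ),
    (Av c)^[n] (fun x => f x + g x) = fun x => (Av c)^[n] f x + (Av c)^[n] g x := by
  induction n with
  | zero => intro f g; rfl
  | succ n ih => intro f g; simp only [Function.iterate_succ_apply, Av_add, ih]

lemma Av_iter_smul (c t : ℝ) (n : ℕ) : ∀ (f : ℝ → ℝ),
    (Av c)^[n] (fun x => t * f x) = fun x => t * (Av c)^[n] f x := by
  induction n with
  | zero => intro f; rfl
  | succ n ih => intro f; simp only [Function.iterate_succ_apply, Av_smul, ih]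

lemma Av_iter_sum (c : ℝ) (n : ℕ) {ι : Type*} (s : Finset ι) (f : ι → ℝ → ℝ) :
    (Av c)^[n] (fun x => ∑ i ∈ s, f i x) = fun x => ∑ i ∈ s, (Av c)^[n] (f i) x := by
  classical
  induction s using Finset.induction_on with
  | empty =>
    have := Av_iter_smul c 0 n (fun _ => 0)
    simpa using this
  | insert a s ha ih =>
    simp only [Finset.sum_insert ha, Av_iter_add, ih]

lemma Av_mul_x (c : ℝ) (h : ℝ → ℝ) :
    Av c (fun x => x * h x) = fun x => x * Av c h x + c * Df c h x := by
  funext x; simp only [Av, Df]; ring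

lemma Av_Df (c : ℝ) (h : ℝ → ℝ) : Av c (Df c h) = Df c (Av c h) := by
  funext x; simp only [Av, Df]; ring

lemma Av_iter_Df (c : ℝ) (n : ℕ) : ∀ h : ℝ → ℝ, (Av c)^[n] (Df c h) = Df c ((Av c)^[n] h) := by
  induction n with
  | zero => intro h; rfl
  | succ n ih => intro h; simp only [Function.iterate_succ_apply, Av_Df, ih]

lemma Av_iter_mul_x (c : ℝ) (n : ℕ) : ∀ h : ℝ → ℝ,
    (Av c)^[n] (fun x => x * h x) =
      fun x => x * (Av c)^[n] h x + n * c * (Av c)^[n - 1] (Df c h) x := by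
  induction n with
  | zero => intro h; simp
  | succ n ih =>
    intro h
    rw [Function.iterate_succ_apply, Av_mul_x, Av_iter_add, ih, Av_iter_smul]
    funext x
    rw [← Av_Df]
    rcases n with _ | n
    · simp
    · simp only [Nat.add_sub_cancel, Function.iterate_succ_apply]
      push_cast; ring

lemma Df_pow (c : ℝ) (r : ℕ) : Df c (fun x => x ^ (r + 1)) =
    fun x => ∑ j ∈ Finset.range (r + 1),
      (c ^ (j + 1) * ((1 + (-1) ^ j) / 2) * ((r + 1).choose (j + 1))) * x ^ (r - j) := by
  funext x
  simp only [Df]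
  rw [sub_eq_add_neg x c, add_comm x c, add_comm x (-c), add_pow, add_pow,
    Finset.sum_range_succ', Finset.sum_range_succ' (fun i => (-c) ^ i * _ * _)]
  simp only [pow_zero, add_sub_add_right_eq_sub]
  rw [← Finset.sum_sub_distrib, Finset.sum_div]
  refine Finset.sum_congr rfl fun j _ => ?_
  rw [Nat.add_sub_add_right, neg_pow c]
  ring

/-- gaussian moments -/
noncomputable def gm (r : ℕ) : ℝ := ∫ x, x ^ r ∂(gaussianReal 0 1)

lemma integrable_pow_gaussian (r : ℕ) : Integrable (fun x : ℝ => x ^ r) (gaussianReal 0 1) := by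
  have h := (memLp_id_gaussianReal (μ := 0) (v := 1) (r : NNReal))
  have := h.integrable_norm_pow'
  refine this.mono' (by fun_prop) (by simp)

lemma gm_zero : gm 0 = 1 := by simp [gm]

lemma gm_one : gm 1 = 0 := by simp [gm]

lemma hasDerivAt_pdf (x : ℝ) :
    HasDerivAt (gaussianPDFReal 0 1) (-x * gaussianPDFReal 0 1 x) x := by
  have h : HasDerivAt (fun x : ℝ => -(x - 0) ^ 2 / (2 * ((1 : NNReal) : ℝ))) (-x) x := by
    have := ((hasDerivAt_pow 2 x).neg).div_const 2
    convert! this using 1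
    · funext y; simp
    · simp only [Nat.cast_ofNat, Nat.add_one_sub_one, pow_one]
      ring
  have := (h.exp).const_mul ((√(2 * Real.pi * ((1 : NNReal) : ℝ)))⁻¹)
  rw [gaussianPDFReal_def]
  convert! this using 1
  ring

lemma gm_succ (r : ℕ) : gm (r + 2) = (r + 1) * gm r := by
  have hi : ∀ s : ℕ, Integrable (fun x => gaussianPDFReal 0 1 x * x ^ s) := by
    intro s
    have h := integrable_pow_gaussian s
    rw [gaussianReal_of_var_ne_zero _ one_ne_zero] at h
    rw [integrable_withDensity_iff_integrable_smul' (measurable_gaussianPDF _ _)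
      (Filter.Eventually.of_forall fun x => gaussianPDF_lt_top)] at h
    simpa [toReal_gaussianPDF] using h
  have hd : ∀ x, HasDerivAt (fun x => gaussianPDFReal 0 1 x * x ^ (r + 1))
      ((r + 1) * (gaussianPDFReal 0 1 x * x ^ r) - gaussianPDFReal 0 1 x * x ^ (r + 2)) x := by
    intro x
    have := (hasDerivAt_pdf x).mul (hasDerivAt_pow (r + 1) x)
    convert! this using 1
    push_cast
    ring
  have h0 := integral_eq_zero_of_hasDerivAt_of_integrable hd
    (((hi r).const_mul _).sub (hi (r + 2))) (hi (r + 1))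
  rw [integral_sub ((hi r).const_mul _) (hi (r + 2)), integral_const_mul] at h0
  simp only [gm, integral_gaussianReal_eq_integral_smul one_ne_zero, smul_eq_mul]
  linarith

open Filter Topology

lemma moment_tendsto (r : ℕ) : ∀ (n : ℕ → ℕ) (c : ℕ → ℝ), Tendsto c atTop (𝓝 0) →
    Tendsto (fun N => (n N : ℝ) * c N ^ 2) atTop (𝓝 1) →
    Tendsto (fun N => (Av (c N))^[n N] (fun x => x ^ r) 0) atTop (𝓝 (gm r)) := by
  induction r using Nat.strong_induction_on with
  | _ r ih =>
  intro n c hc hn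
  have hAv : ∀ (c t : ℝ) (n : ℕ), (Av c)^[n] (fun _ => t) 0 = t := by
    intro c t n
    induction n with
    | zero => rfl
    | succ n ih =>
      rw [Function.iterate_succ_apply]
      convert ih using 2
      funext x; simp [Av]
  rcases r with _ | _ | r
  · simp only [pow_zero, hAv, gm_zero]
    exact tendsto_const_nhds
  · have : ∀ N, (Av (c N))^[n N] (fun x => x ^ (0 + 1)) 0 = 0 := by
      intro N
      have := Av_iter_mul_x (c N) (n N) (fun _ => 1)
      have e : Df (c N) (fun _ => 1) = fun _ => 0 := by funext x; simp [Df]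
      simp only [mul_one, e] at this
      simp only [zero_add, pow_one, this, hAv]
      simp
    simp only [this, zero_add, gm_one]
    exact tendsto_const_nhds
  · have e : ∀ N, (Av (c N))^[n N] (fun x => x ^ (r + 1 + 1)) 0 =
        ∑ j ∈ Finset.range (r + 1), ((n N : ℝ) * c N ^ 2) * (c N ^ j * ((1 + (-1) ^ j) / 2) *
          ((r + 1).choose (j + 1))) * (Av (c N))^[n N - 1] (fun x => x ^ (r - j)) 0 := by
      intro N
      have := Av_iter_mul_x (c N) (n N) (fun x => x ^ (r + 1))
      have e1 : (fun x : ℝ => x ^ (r + 1 + 1)) = fun x => x * x ^ (r + 1) := by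
        funext x; ring
      rw [e1, this, Df_pow, Av_iter_sum]
      simp only [zero_mul, zero_add, Av_iter_smul, Finset.mul_sum]
      refine Finset.sum_congr rfl fun j _ => ?_
      ring
    simp only [e]
    have hn' : Tendsto (fun N => ((n N - 1 : ℕ) : ℝ) * c N ^ 2) atTop (𝓝 1) := by
      have h1 : Tendsto (fun N => (n N : ℝ) * c N ^ 2 - c N ^ 2) atTop (𝓝 1) := by
        simpa using hn.sub (hc.pow 2)
      have hev : ∀ᶠ N in atTop, (0 : ℝ) < (n N : ℝ) * c N ^ 2 := hn.eventually_const_lt one_pos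
      refine h1.congr' ?_
      filter_upwards [hev] with N hN
      have : 1 ≤ n N := by
        rcases Nat.eq_zero_or_pos (n N) with h | h
        · rw [h] at hN; simp at hN
        · exact h
      rw [Nat.cast_sub this]; push_cast; ring
    have hlim : Tendsto (fun N => ∑ j ∈ Finset.range (r + 1), ((n N : ℝ) * c N ^ 2) *
        (c N ^ j * ((1 + (-1) ^ j) / 2) *
          ((r + 1).choose (j + 1))) * (Av (c N))^[n N - 1] (fun x => x ^ (r - j)) 0) atTop
        (𝓝 (∑ j ∈ Finset.range (r + 1), 1 * ((0:ℝ) ^ j * ((1 + (-1) ^ j) / 2) *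
          ((r + 1).choose (j + 1))) * gm (r - j))) := by
      refine tendsto_finsetSum _ fun j _ => ?_
      exact (hn.mul (((hc.pow j).mul_const _).mul_const _)).mul
        (ih (r - j) (by omega) (fun N => n N - 1) c hc hn')
    convert! hlim using 2
    rw [gm_succ, Finset.sum_range_succ', Finset.sum_eq_zero]
    · simp
    · intro j _; simp
end GHC
namespace GHC
open Filter Topology

lemma Ex_prod {d : ℕ} (c : ℝ) (L : List (Fin d)) : ∀ (h : Fin d → ℝ → ℝ),
    Ex c L (fun x => ∏ i, h i (x i)) = ∏ i, (Av c)^[L.count i] (h i) 0 := by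
  induction L with
  | nil => intro h; simp [Ex]
  | cons j L ih =>
    intro h
    have e : (fun x : Fin d → ℝ => ((∏ i, h i ((x + Pi.single j c : Fin d → ℝ) i)) +
        ∏ i, h i ((x - Pi.single j c : Fin d → ℝ) i)) / 2) =
        fun x => ∏ i, (Function.update h j (Av c (h j))) i (x i) := by
      funext x
      rw [← Finset.mul_prod_erase _ _ (Finset.mem_univ j),
        ← Finset.mul_prod_erase _ _ (Finset.mem_univ j),
        ← Finset.mul_prod_erase _ (fun i => Function.update h j (Av c (h j)) i (x i))
          (Finset.mem_univ j)]
      have e1 : ∏ i ∈ Finset.univ.erase j, h i ((x + Pi.single j c : Fin d → ℝ) i)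
          = ∏ i ∈ Finset.univ.erase j, h i (x i) :=
        Finset.prod_congr rfl fun i hi => by simp [Finset.ne_of_mem_erase hi]
      have e2 : ∏ i ∈ Finset.univ.erase j, h i ((x - Pi.single j c : Fin d → ℝ) i)
          = ∏ i ∈ Finset.univ.erase j, h i (x i) :=
        Finset.prod_congr rfl fun i hi => by simp [Finset.ne_of_mem_erase hi]
      have e3 : ∏ i ∈ Finset.univ.erase j, Function.update h j (Av c (h j)) i (x i)
          = ∏ i ∈ Finset.univ.erase j, h i (x i) :=
        Finset.prod_congr rfl fun i hi => by simp [Finset.ne_of_mem_erase hi]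
      rw [e1, e2, e3]
      simp [Av]
      ring
    simp only [Ex]
    rw [e, ih]
    refine Finset.prod_congr rfl fun i _ => ?_
    by_cases hij : i = j
    · subst hij
      simp
    · rw [List.count_cons_of_ne (Ne.symm hij)]
      simp [hij]

/-- each index repeated `N` times -/
def LN (d N : ℕ) : List (Fin d) := (List.replicate N (List.finRange d)).flatten

lemma count_LN (d N : ℕ) (i : Fin d) : (LN d N).count i = N := by
  simp [LN, List.count_flatten, List.count_eq_one_of_mem (List.nodup_finRange d) (List.mem_finRange i)]

/-- standard gaussian measure -/
noncomputable abbrev γ (d : ℕ) : Measure (Fin d → ℝ) := Measure.pi fun _ : Fin d => gaussianReal 0 1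

lemma integrable_eval {d : ℕ} (q : MvPolynomial (Fin d) ℝ) :
    Integrable (fun x => MvPolynomial.eval x q) (γ d) := by
  simp only [MvPolynomial.eval_eq']
  refine integrable_finsetSum _ fun s _ => Integrable.const_mul ?_ _
  exact Integrable.fintype_prod (f := fun i (x : ℝ) => x ^ s i)
    (fun i => integrable_pow_gaussian (s i))

/-- step size -/
noncomputable def cN (N : ℕ) : ℝ := (√((N : ℝ)))⁻¹

lemma cN_tendsto : Tendsto cN atTop (𝓝 0) :=
  tendsto_inv_atTop_zero.comp (Real.tendsto_sqrt_atTop.comp tendsto_natCast_atTop_atTop)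

lemma cN_sq : Tendsto (fun N : ℕ => (N : ℝ) * cN N ^ 2) atTop (𝓝 1) := by
  refine tendsto_const_nhds.congr' ?_
  filter_upwards [eventually_gt_atTop 0] with N hN
  have : (0 : ℝ) < N := by exact_mod_cast hN
  rw [cN, inv_pow, Real.sq_sqrt this.le, mul_inv_cancel₀ this.ne']

lemma Ex_sum {d : ℕ} (c : ℝ) (L : List (Fin d)) {ι : Type*} (s : Finset ι)
    (f : ι → (Fin d → ℝ) → ℝ) :
    Ex c L (fun x => ∑ i ∈ s, f i x) = ∑ i ∈ s, Ex c L (f i) := by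
  classical
  induction s using Finset.induction_on with
  | empty => simpa using Ex_const L 0
  | insert a s ha ih => simp only [Finset.sum_insert ha, Ex_add, ih]

lemma Ex_tendsto {d : ℕ} (q : MvPolynomial (Fin d) ℝ) :
    Tendsto (fun N => Ex (cN N) (LN d N) (fun x => MvPolynomial.eval x q)) atTop
      (𝓝 (∫ x, MvPolynomial.eval x q ∂(γ d))) := by
  simp only [MvPolynomial.eval_eq', Ex_sum, Ex_smul]
  rw [integral_finsetSum _ (fun s _ => Integrable.const_mul (Integrable.fintype_prod
    (f := fun i (x : ℝ) => x ^ s i) (fun i => integrable_pow_gaussian (s i))) _)]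
  refine tendsto_finsetSum _ fun s _ => ?_
  rw [integral_const_mul, integral_fintype_prod_eq_prod (f := fun i (x : ℝ) => x ^ s i)]
  refine Tendsto.const_mul _ ?_
  have : ∀ N, Ex (cN N) (LN d N) (fun x => ∏ i, x i ^ s i)
      = ∏ i, (Av (cN N))^[N] (fun x => x ^ s i) 0 := by
    intro N
    rw [Ex_prod (cN N) (LN d N) (fun i x => x ^ s i)]
    simp only [count_LN]
  simp only [this]
  exact tendsto_finsetProd _ fun i _ => moment_tendsto (s i) (fun N => N) cN cN_tendsto cN_sq

theorem even_bound {d k : ℕ} (q : MvPolynomial (Fin d) ℝ) (hq : q.totalDegree ≤ k) (m : ℕ)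
    (hm : 1 ≤ m) : ∫ x, (MvPolynomial.eval x q) ^ (2 * m) ∂(γ d) ≤
      ((2 * (m : ℝ) - 1) ^ k * ∫ x, (MvPolynomial.eval x q) ^ 2 ∂(γ d)) ^ m := by
  have h1 := Ex_tendsto (q ^ (2 * m))
  have h2 := Ex_tendsto (q ^ 2)
  simp only [map_pow] at h1 h2
  exact le_of_tendsto_of_tendsto' h1 ((h2.const_mul _).pow m)
    fun N => Ex_hyper m hm _ k _ (Dg.mvPolynomial q hq)

theorem even_norm {d k : ℕ} (q : MvPolynomial (Fin d) ℝ) (hq : q.totalDegree ≤ k) (m : ℕ)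
    (hm : 1 ≤ m) (C : ℝ) (hC0 : 0 ≤ C) (hC : 2 * (m : ℝ) - 1 ≤ C ^ 2) :
    (∫ x, |MvPolynomial.eval x q| ^ (2 * m) ∂(γ d)) ^ (((2 * m : ℕ) : ℝ)⁻¹) ≤
      C ^ k * (∫ x, (MvPolynomial.eval x q) ^ 2 ∂(γ d)) ^ ((2 : ℝ)⁻¹) := by
  have hI : 0 ≤ ∫ x, (MvPolynomial.eval x q) ^ 2 ∂(γ d) := integral_nonneg fun x => sq_nonneg _
  have hm' : (1 : ℝ) ≤ m := by exact_mod_cast hm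
  set I := ∫ x, (MvPolynomial.eval x q) ^ 2 ∂(γ d)
  have h := even_bound q hq m hm
  have e : ∀ x, |MvPolynomial.eval x q| ^ (2 * m) = (MvPolynomial.eval x q) ^ (2 * m) :=
    fun x => (even_two_mul m).pow_abs _
  simp only [e]
  have h3 : ∫ x, (MvPolynomial.eval x q) ^ (2 * m) ∂(γ d) ≤
      (C ^ k * I ^ ((2 : ℝ)⁻¹)) ^ (2 * m) := by
    refine h.trans ?_
    rw [pow_mul, mul_pow (C ^ k), ← Real.rpow_mul_natCast hI]
    have h4 : (0 : ℝ) ≤ 2 * (m : ℝ) - 1 := by linarith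
    have e5 : I ^ ((2 : ℝ)⁻¹ * (2 : ℕ)) = I := by norm_num
    rw [e5, ← pow_mul, mul_comm k 2, pow_mul]
    gcongr
  have h0 : 0 ≤ ∫ x, (MvPolynomial.eval x q) ^ (2 * m) ∂(γ d) :=
    integral_nonneg fun x => (even_two_mul m).pow_nonneg _
  calc _ ≤ ((C ^ k * I ^ ((2 : ℝ)⁻¹)) ^ (2 * m)) ^ (((2 * m : ℕ) : ℝ)⁻¹) := by gcongr
    _ = _ := Real.pow_rpow_inv_natCast (by positivity) (by omega)

lemma lyapunov {d : ℕ} (q : MvPolynomial (Fin d) ℝ) (p : ℕ) (hp : 1 ≤ p) (hodd : Even (p + 1)) :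
    (∫ x, |MvPolynomial.eval x q| ^ p ∂(γ d)) ^ ((p : ℝ)⁻¹) ≤
    (∫ x, |MvPolynomial.eval x q| ^ (p + 1) ∂(γ d)) ^ (((p + 1 : ℕ) : ℝ)⁻¹) := by
  have hp0 : (0 : ℝ) < p := by exact_mod_cast hp
  have hint : ∀ n, Integrable (fun x => |MvPolynomial.eval x q| ^ n) (γ d) := by
    intro n
    have := (integrable_eval (q ^ n)).abs
    simpa [abs_pow] using this
  have hJ := ConvexOn.map_integral_le (μ := γ d) (f := fun x => |MvPolynomial.eval x q| ^ p)
    (g := fun t : ℝ => t ^ (((p + 1 : ℕ) : ℝ) / p)) (s := Set.Ici 0)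
    (convexOn_rpow (by rw [le_div_iff₀ hp0]; push_cast; linarith))
    (Real.continuous_rpow_const (by positivity)).continuousOn isClosed_Ici
    (Filter.Eventually.of_forall fun x => by simp) (hint p)
    (by
      have := hint (p + 1)
      convert! this using 2 with x
      simp only [Function.comp]
      rw [← Real.rpow_natCast_mul (abs_nonneg _), mul_div_cancel₀ _ hp0.ne', Real.rpow_natCast])
  have e : ∀ x, (|MvPolynomial.eval x q| ^ p) ^ (((p + 1 : ℕ) : ℝ) / p)
      = |MvPolynomial.eval x q| ^ (p + 1) := by
    intro x
    rw [← Real.rpow_natCast_mul (abs_nonneg _), mul_div_cancel₀ _ hp0.ne', Real.rpow_natCast]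
  simp only [e] at hJ
  have h0 : 0 ≤ ∫ x, |MvPolynomial.eval x q| ^ p ∂(γ d) := integral_nonneg fun x => by positivity
  have hpp : (0 : ℝ) < ((p + 1 : ℕ) : ℝ) := by positivity
  calc _ = ((∫ x, |MvPolynomial.eval x q| ^ p ∂(γ d)) ^ (((p + 1 : ℕ) : ℝ) / p)) ^
      (((p + 1 : ℕ) : ℝ)⁻¹) := by
        rw [← Real.rpow_mul h0]; congr 1; field_simp
    _ ≤ _ := by gcongr

end GHC




/-- (Gaussian hypercontractivity) For any polynomial `q : ℝ^d → ℝ` of degree `k` and any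
integer `p ≥ 2`, `‖q‖_{L^p(γ_d)} ≤ (p−1)^k ‖q‖_{L^2(γ_d)}`, where `γ_d` is the standard
Gaussian measure on `ℝ^d`. -/
theorem gaussian_hypercontractivity (d k : ℕ) (q : MvPolynomial (Fin d) ℝ)
    (hq : q.totalDegree ≤ k) (p : ℕ) (hp : 2 ≤ p) :
    (∫ z : Fin d → ℝ, |MvPolynomial.eval z q| ^ p
        ∂(Measure.pi fun _ : Fin d => gaussianReal 0 1)) ^ ((p : ℝ)⁻¹) ≤
      ((p : ℝ) - 1) ^ k *
        (∫ z : Fin d → ℝ, (MvPolynomial.eval z q) ^ 2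
            ∂(Measure.pi fun _ : Fin d => gaussianReal 0 1)) ^ ((2 : ℝ)⁻¹) := by
  have hp' : (2 : ℝ) ≤ p := by exact_mod_cast hp
  rcases Nat.even_or_odd p with he | ho
  · obtain ⟨m, rfl⟩ := he.two_dvd
    refine GHC.even_norm q hq m (by omega) _ (by linarith) ?_
    push_cast at hp' ⊢
    nlinarith
  · have h3 : 3 ≤ p := by
      obtain ⟨t, rfl⟩ := ho
      omega
    have h3' : (3 : ℝ) ≤ p := by exact_mod_cast h3
    have he : Even (p + 1) := ho.add_one
    refine (GHC.lyapunov q p (by omega) he).trans ?_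
    obtain ⟨m, hm⟩ := he.two_dvd
    rw [hm]
    refine GHC.even_norm q hq m (by omega) _ (by linarith) ?_
    have : (p : ℝ) + 1 = 2 * m := by exact_mod_cast hm
    rw [← this]
    nlinarith
end

section
/- (Leading drift of the spherical gradient) Let x ∼ N(0, I_d), W* ∈ ℝ^{m×d} with orthonormal rows, w ∈ ℝ^d a unit vector, and consider the degree-2 component f₂(x) = m^{-1/2} Σ_{i=1}^{m} He₂(⟨w*_i, x⟩). Then E[f₂(x) He₁(⟨w, x⟩) x] projected orthogonally to w equals √2 m^{-1/2} (I − wwᵀ)(W*)ᵀ W* w; its component along the unit vector u* = P_{W*}w / ‖P_{W*}w‖ equals √2 m^{-1/2} (mₜ − mₜ³) where mₜ = ⟨u*, w⟩ and P_{W*} = (W*)ᵀW*. -/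
open MeasureTheory ProbabilityTheory Matrix

lemma aux_deriv (v : ℝ) (P Q : ℝ → ℝ) (hP : ∀ t, HasDerivAt P (Q t) t) :
    deriv (fun t => P t * Real.exp (v * t ^ 2 / 2))
      = fun t => (Q t + v * t * P t) * Real.exp (v * t ^ 2 / 2) := by
  funext t
  have h1 : HasDerivAt (fun t : ℝ => v * t ^ 2 / 2) (v * t) t := by
    have := ((hasDerivAt_pow 2 t).const_mul v).div_const 2
    convert! this using 1
    push_cast
    ring
  have := ((hP t).mul h1.exp).deriv
  refine this.trans ?_
  ring

lemma fourth_moment (v : NNReal) : ∫ x, x ^ 4 ∂(gaussianReal 0 v) = 3 * (v : ℝ) ^ 2 := by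
  have h := iteratedDeriv_mgf_zero (X := id) (μ := gaussianReal 0 v) (by simp) 4
  have h2 : mgf id (gaussianReal 0 v) = fun t => (fun _ => (1 : ℝ)) t * Real.exp (v * t ^ 2 / 2) := by
    rw [mgf_id_gaussianReal]; funext t; simp
  have e : ∫ x, x ^ 4 ∂(gaussianReal 0 v) = (gaussianReal 0 v)[(id : ℝ → ℝ) ^ 4] := by simp
  rw [e, ← h, h2, iteratedDeriv_succ', iteratedDeriv_succ', iteratedDeriv_succ', iteratedDeriv_succ',
    iteratedDeriv_zero]
  rw [aux_deriv v (fun _ => 1) (fun _ => 0) (fun t => hasDerivAt_const _ _),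
    aux_deriv v _ (fun _ => v) (fun t => ?_),
    aux_deriv v _ (fun t => 2 * v ^ 2 * t) (fun t => ?_),
    aux_deriv v _ (fun t => 3 * v ^ 2 + 3 * v ^ 3 * t ^ 2) (fun t => ?_)]
  · simp
  all_goals
    simp only [zero_add, mul_one]
  · convert! ((hasDerivAt_id t).const_mul ((v : ℝ) ^ 2 * 3)).add
      ((hasDerivAt_pow 3 t).const_mul ((v : ℝ) ^ 3)) using 1
    · funext s; simp; ring
    · push_cast; ring
  · convert! ((hasDerivAt_pow 2 t).const_mul ((v : ℝ) ^ 2)).const_add (v : ℝ) using 1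
    · funext s; ring
    · push_cast; ring
  · simpa using (hasDerivAt_id t).const_mul (v : ℝ)

lemma second_moment (v : NNReal) : ∫ x, x ^ 2 ∂(gaussianReal 0 v) = (v : ℝ) := by
  have h := variance_fun_id_gaussianReal (μ := 0) (v := v)
  rw [variance_eq_integral (by fun_prop)] at h
  simpa using h

lemma map_dot (d : ℕ) (a : Fin d → ℝ) :
    (Measure.pi fun _ : Fin d => gaussianReal 0 1).map (fun x => a ⬝ᵥ x)
      = gaussianReal 0 (Real.toNNReal (a ⬝ᵥ a)) := by
  have hm : Measurable (fun x : Fin d → ℝ => a ⬝ᵥ x) := by unfold dotProduct; fun_prop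
  have : IsProbabilityMeasure ((Measure.pi fun _ : Fin d => gaussianReal 0 1).map (fun x => a ⬝ᵥ x)) :=
    Measure.isProbabilityMeasure_map hm.aemeasurable
  apply Measure.ext_of_charFun
  ext s
  have h0 : 0 ≤ a ⬝ᵥ a := by
    unfold dotProduct; exact Finset.sum_nonneg fun i _ => mul_self_nonneg _
  rw [charFun_apply_real, integral_map hm.aemeasurable (Measurable.aestronglyMeasurable (by fun_prop)),
    charFun_gaussianReal, Real.coe_toNNReal _ h0]
  have : ∀ x : Fin d → ℝ, Complex.exp (s * (a ⬝ᵥ x : ℝ) * Complex.I)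
      = ∏ i, Complex.exp (((s * a i : ℝ) : ℂ) * (x i) * Complex.I) := by
    intro x
    rw [← Complex.exp_sum]
    congr 1
    simp only [dotProduct, Complex.ofReal_sum, Finset.mul_sum, Finset.sum_mul]
    refine Finset.sum_congr rfl fun i _ => ?_
    push_cast; ring
  simp_rw [this]
  rw [integral_fintype_prod_eq_prod (f := fun i (y : ℝ) => Complex.exp (((s * a i : ℝ) : ℂ) * y * Complex.I))]
  simp_rw [← charFun_apply_real, charFun_gaussianReal]
  rw [← Complex.exp_sum]
  congr 1
  simp only [dotProduct, Complex.ofReal_sum, Finset.sum_mul, Finset.sum_div]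
  simp [Finset.sum_div]
  refine Finset.sum_congr rfl fun i _ => ?_
  ring

lemma dot_meas {d : ℕ} (a : Fin d → ℝ) : Measurable (fun x : Fin d → ℝ => a ⬝ᵥ x) := by
  unfold dotProduct; fun_prop

lemma int_pow {d : ℕ} (a : Fin d → ℝ) (n : ℕ) :
    Integrable (fun x => (a ⬝ᵥ x) ^ n) (Measure.pi fun _ : Fin d => gaussianReal 0 1) := by
  have h : Integrable (fun y : ℝ => y ^ n) (gaussianReal 0 (Real.toNNReal (a ⬝ᵥ a))) := by
    have := (memLp_id_gaussianReal (μ := 0) (v := Real.toNNReal (a ⬝ᵥ a)) n)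
    have h2 := this.integrable_norm_pow'
    refine h2.mono' (by fun_prop) (Filter.Eventually.of_forall fun y => ?_)
    simp
  rw [← map_dot] at h
  exact h.comp_measurable (dot_meas a)

lemma dot_nn {d : ℕ} (a : Fin d → ℝ) : 0 ≤ a ⬝ᵥ a := by
    unfold dotProduct; exact Finset.sum_nonneg fun i _ => mul_self_nonneg _

lemma dot_four {d : ℕ} (a : Fin d → ℝ) :
    ∫ x, (a ⬝ᵥ x) ^ 4 ∂(Measure.pi fun _ : Fin d => gaussianReal 0 1) = 3 * (a ⬝ᵥ a) ^ 2 := by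
  have := fourth_moment (Real.toNNReal (a ⬝ᵥ a))
  rw [← map_dot, integral_map (dot_meas a).aemeasurable (by fun_prop)] at this
  rw [this, Real.coe_toNNReal _ (dot_nn a)]

lemma dot_two {d : ℕ} (a : Fin d → ℝ) :
    ∫ x, (a ⬝ᵥ x) ^ 2 ∂(Measure.pi fun _ : Fin d => gaussianReal 0 1) = a ⬝ᵥ a := by
  have := second_moment (Real.toNNReal (a ⬝ᵥ a))
  rw [← map_dot, integral_map (dot_meas a).aemeasurable (by fun_prop)] at this
  rw [this, Real.coe_toNNReal _ (dot_nn a)]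

/-- the mixed moment together with integrability -/
lemma mixed {d : ℕ} (a b c : Fin d → ℝ) :
    Integrable (fun x => ((a ⬝ᵥ x) ^ 2 - 1) * ((b ⬝ᵥ x) * (c ⬝ᵥ x)))
      (Measure.pi fun _ : Fin d => gaussianReal 0 1) ∧
    ∫ x, ((a ⬝ᵥ x) ^ 2 - 1) * ((b ⬝ᵥ x) * (c ⬝ᵥ x)) ∂(Measure.pi fun _ : Fin d => gaussianReal 0 1)
      = (a ⬝ᵥ a) * (b ⬝ᵥ c) + 2 * (a ⬝ᵥ b) * (a ⬝ᵥ c) - b ⬝ᵥ c := by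
  have key : (fun x : Fin d → ℝ => ((a ⬝ᵥ x) ^ 2 - 1) * ((b ⬝ᵥ x) * (c ⬝ᵥ x))) = fun x =>
      (1 / 48) * ((a + (b + c)) ⬝ᵥ x) ^ 4 + (1 / 48) * ((a - (b + c)) ⬝ᵥ x) ^ 4
      + (-1 / 24) * ((b + c) ⬝ᵥ x) ^ 4 + (-1 / 48) * ((a + (b - c)) ⬝ᵥ x) ^ 4
      + (-1 / 48) * ((a - (b - c)) ⬝ᵥ x) ^ 4 + (1 / 24) * ((b - c) ⬝ᵥ x) ^ 4
      + (-1 / 4) * ((b + c) ⬝ᵥ x) ^ 2 + (1 / 4) * ((b - c) ⬝ᵥ x) ^ 2 := by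
    funext x
    simp only [add_dotProduct, sub_dotProduct]
    ring
  have I := fun (r : ℝ) (n : ℕ) (e : Fin d → ℝ) => (int_pow e n).const_mul r
  have h1 := (I (1 / 48) 4 (a + (b + c))).add (I (1 / 48) 4 (a - (b + c)))
  have h2 := h1.add (I (-1 / 24) 4 (b + c))
  have h3 := h2.add (I (-1 / 48) 4 (a + (b - c)))
  have h4 := h3.add (I (-1 / 48) 4 (a - (b - c)))
  have h5 := h4.add (I (1 / 24) 4 (b - c))
  have h6 := h5.add (I (-1 / 4) 2 (b + c))
  have h7 := h6.add (I (1 / 4) 2 (b - c))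
  rw [key]
  refine ⟨h7, ?_⟩
  refine (integral_add' h6 (I _ _ _)).trans ?_
  rw [integral_add' h5 (I _ _ _), integral_add' h4 (I _ _ _),
    integral_add' h3 (I _ _ _), integral_add' h2 (I _ _ _), integral_add' h1 (I _ _ _),
    integral_add' (I _ _ _) (I _ _ _)]
  simp only [integral_const_mul, dot_four, dot_two]
  simp only [add_dotProduct, sub_dotProduct,
    dotProduct_add, dotProduct_sub]
  rw [dotProduct_comm b a, dotProduct_comm c a, dotProduct_comm c b]
  ring

lemma drift (d m : ℕ) (W : Fin m → Fin d → ℝ)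
    (hW : ∀ i j, W i ⬝ᵥ W j = if i = j then 1 else 0) (w : Fin d → ℝ) (r : ℝ) :
    ∫ x, ((r * ∑ i, ((W i ⬝ᵥ x) ^ 2 - 1) / Real.sqrt 2) * (w ⬝ᵥ x)) • x
      ∂(Measure.pi fun _ : Fin d => gaussianReal 0 1)
    = (Real.sqrt 2 * r) • ∑ i, (W i ⬝ᵥ w) • W i := by
  have s2 : Real.sqrt 2 * Real.sqrt 2 = 2 := Real.mul_self_sqrt (by norm_num)
  have s0 : Real.sqrt 2 ≠ 0 := by positivity
  have key : ∀ k, (fun x : Fin d → ℝ =>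
      (((r * ∑ i, ((W i ⬝ᵥ x) ^ 2 - 1) / Real.sqrt 2) * (w ⬝ᵥ x)) • x) k)
      = fun x => ∑ i, (r / Real.sqrt 2) *
        (((W i ⬝ᵥ x) ^ 2 - 1) * ((w ⬝ᵥ x) * (Pi.single k 1 ⬝ᵥ x))) := by
    intro k
    funext x
    simp only [Pi.smul_apply, smul_eq_mul, single_one_dotProduct, Finset.mul_sum, Finset.sum_mul]
    exact Finset.sum_congr rfl fun i _ => by ring
  have hi : ∀ k, Integrable (fun x : Fin d → ℝ =>
      (((r * ∑ i, ((W i ⬝ᵥ x) ^ 2 - 1) / Real.sqrt 2) * (w ⬝ᵥ x)) • x) k)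
      (Measure.pi fun _ : Fin d => gaussianReal 0 1) := by
    intro k
    rw [key]
    exact integrable_finsetSum _ fun i _ => (mixed _ _ _).1.const_mul _
  funext k
  rw [eval_integral hi, key, integral_finsetSum _ fun i _ => (mixed _ _ _).1.const_mul _]
  simp only [integral_const_mul, (mixed _ _ _).2, Pi.smul_apply, Finset.sum_apply, smul_eq_mul,
    Finset.mul_sum, hW, if_true, dotProduct_single_one]
  refine Finset.sum_congr rfl fun i _ => ?_
  field_simp
  linear_combination (-(W i ⬝ᵥ w) * W i k * r) * s2

/-- (Leading drift of the spherical gradient) Let `x ∼ N(0, I_d)`, `W*` with orthonormal rows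
`w*_1, …, w*_m`, `w` a unit vector, and `f₂(x) = m^{-1/2} Σ_i He₂(⟨w*_i, x⟩)` with
`He₂(z) = (z² − 1)/√2`. Then `E[f₂(x) He₁(⟨w,x⟩) x]` projected orthogonally to `w` equals
`√2 m^{-1/2} (I − wwᵀ)(W*)ᵀW* w`, and its component along `u* = P_{W*}w/‖P_{W*}w‖` equals
`√2 m^{-1/2} (mₜ − mₜ³)` where `mₜ = ⟨u*, w⟩`. -/
theorem leading_drift_spherical_gradient (d m : ℕ) (hm : 0 < m)
    (W : Fin m → Fin d → ℝ)
    (hW : ∀ i j, W i ⬝ᵥ W j = if i = j then 1 else 0)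
    (w : Fin d → ℝ) (hw : ∑ t, w t ^ 2 = 1) :
    let γ := Measure.pi fun _ : Fin d => gaussianReal 0 1
    let f₂ : (Fin d → ℝ) → ℝ :=
      fun x => (m : ℝ) ^ (-(1 : ℝ) / 2) * ∑ i, ((W i ⬝ᵥ x) ^ 2 - 1) / Real.sqrt 2
    let v := ∫ x, (f₂ x * (w ⬝ᵥ x)) • x ∂γ
    let p : Fin d → ℝ := ∑ i, (W i ⬝ᵥ w) • W i
    (v - (w ⬝ᵥ v) • w = (Real.sqrt 2 * (m : ℝ) ^ (-(1 : ℝ) / 2)) • (p - (w ⬝ᵥ p) • w)) ∧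
      (p ≠ 0 →
        let u : Fin d → ℝ := (Real.sqrt (∑ t, p t ^ 2))⁻¹ • p
        u ⬝ᵥ (v - (w ⬝ᵥ v) • w) =
          Real.sqrt 2 * (m : ℝ) ^ (-(1 : ℝ) / 2) * ((u ⬝ᵥ w) - (u ⬝ᵥ w) ^ 3)) := by
  intro γ f₂ v p
  have hv : v = (Real.sqrt 2 * (m : ℝ) ^ (-(1 : ℝ) / 2)) • p := drift d m W hW w _
  have h1 : v - (w ⬝ᵥ v) • w = (Real.sqrt 2 * (m : ℝ) ^ (-(1 : ℝ) / 2)) • (p - (w ⬝ᵥ p) • w) := by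
    rw [hv, dotProduct_smul, smul_sub, smul_smul, smul_eq_mul]
  refine ⟨h1, ?_⟩
  intro hp u
  have hpp : ∑ t, p t ^ 2 = p ⬝ᵥ p := by simp [dotProduct, sq]
  have hpw : p ⬝ᵥ w = p ⬝ᵥ p := by
    have e1 : p ⬝ᵥ w = ∑ i, (W i ⬝ᵥ w) * (W i ⬝ᵥ w) := by
      simp only [p, sum_dotProduct, smul_dotProduct, smul_eq_mul]
    have e2 : ∀ i, W i ⬝ᵥ p = W i ⬝ᵥ w := by
      intro i
      simp only [p, dotProduct_sum, dotProduct_smul, smul_eq_mul, hW]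
      simp
    rw [e1]
    conv_rhs => enter [1]; simp only [p]
    simp only [sum_dotProduct, smul_dotProduct, smul_eq_mul, e2]
  have hpos : 0 < p ⬝ᵥ p := lt_of_le_of_ne (dot_nn p) fun h => hp (dotProduct_self_eq_zero.1 h.symm)
  set q := Real.sqrt (p ⬝ᵥ p) with hq
  have hq2 : p ⬝ᵥ p = q ^ 2 := (Real.sq_sqrt hpos.le).symm
  have hq0 : q ≠ 0 := (Real.sqrt_pos.2 hpos).ne'
  have hu : u = q⁻¹ • p := by simp only [u, hpp, hq]
  rw [h1, hu]
  simp only [smul_dotProduct, dotProduct_smul, dotProduct_sub, smul_eq_mul, dotProduct_comm w p, hpw, hq2]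
  field_simp
end
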